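/- arXiv:0901.4232 — 6 statements merged into one kernel-verified Lean document; each statement's English description precedes it below -/
import Mathlib

section
/- A function f : ℝ² → ℝ is nondecreasing in each variable and satisfies f(r·x₁+s, r·x₂+s) = r·f(x₁,x₂)+s for all r > 0, s ∈ ℝ, and (x₁,x₂) ∈ ℝ², if and only if there exist real numbers u, v ∈ [0,1] such that f(x₁,x₂) = x₁·(1−v) + x₂·v whenever x₁ ≤ x₂, and f(x₁,x₂) = x₂·(1−u) + x₁·u whenever x₂ ≤ x₁. (Equivalently, f is the 2-variable discrete Choquet integral with respect to the fuzzy measure μ on {1,2} given by μ({1}) = u, μ({2}) = v, μ(∅)=0, μ({1,2})=1.) -/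
/-! By translation and positive scaling, `f` is determined on the half-plane `x₁ < x₂` by `f 0 1`, on
`x₂ < x₁` by `f 1 0`, and on the diagonal by `f 0 0 = 0`. So `v = f 0 1` and `u = f 1 0`, and
monotonicity places both between `f 0 0 = 0` and `f 1 1 = 1`. Conversely, the two linear pieces are
monotone in each variable and agree on the diagonal, so monotonicity across the diagonal follows by
comparing with the diagonal value. -/

/-- **Characterization of the 2-variable Choquet integral.**
A function `f : ℝ² → ℝ` is nondecreasing in each variable and meaningful for the same
input-output interval scales iff there exist `u, v ∈ [0,1]` such that
`f(x₁,x₂) = x₁(1−v) + x₂v` when `x₁ ≤ x₂` and `f(x₁,x₂) = x₂(1−u) + x₁u` when `x₂ ≤ x₁`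
(i.e. `f` is the 2-variable Choquet integral w.r.t. the fuzzy measure with
`μ({1}) = u`, `μ({2}) = v`). -/
theorem choquet_two_variables (f : ℝ → ℝ → ℝ) :
    ((∀ y : ℝ, Monotone (fun x => f x y)) ∧
     (∀ x : ℝ, Monotone (fun y => f x y)) ∧
     (∀ (r s : ℝ), 0 < r → ∀ x₁ x₂ : ℝ,
        f (r * x₁ + s) (r * x₂ + s) = r * f x₁ x₂ + s)) ↔
    (∃ u v : ℝ, u ∈ Set.Icc (0 : ℝ) 1 ∧ v ∈ Set.Icc (0 : ℝ) 1 ∧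
       (∀ x₁ x₂ : ℝ, x₁ ≤ x₂ → f x₁ x₂ = x₁ * (1 - v) + x₂ * v) ∧
       (∀ x₁ x₂ : ℝ, x₂ ≤ x₁ → f x₁ x₂ = x₂ * (1 - u) + x₁ * u)) := by
  constructor
  · rintro ⟨hm₁, hm₂, hf⟩
    have h00 : f 0 0 = 0 := by
      have h := hf 2 0 (by norm_num) 0 0
      norm_num at h
      linarith
    have hdiag : ∀ t, f t t = t := by
      intro t
      have h := hf 1 t one_pos 0 0
      simpa [h00] using h
    refine ⟨f 1 0, f 0 1, ⟨?_, ?_⟩, ⟨?_, ?_⟩, ?_, ?_⟩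
    · have h : f 0 0 ≤ f 1 0 := hm₁ 0 zero_le_one
      linarith
    · have h : f 1 0 ≤ f 1 1 := hm₂ 1 zero_le_one
      linarith [hdiag 1]
    · have h : f 0 0 ≤ f 0 1 := hm₂ 0 zero_le_one
      linarith
    · have h : f 0 1 ≤ f 1 1 := hm₁ 1 zero_le_one
      linarith [hdiag 1]
    · intro a b hab
      rcases hab.eq_or_lt with rfl | hlt
      · rw [hdiag]; ring
      · have h := hf (b - a) a (sub_pos.2 hlt) 0 1
        simp only [mul_zero, zero_add, mul_one, sub_add_cancel] at h
        rw [h]; ring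
    · intro a b hba
      rcases hba.eq_or_lt with rfl | hlt
      · rw [hdiag]; ring
      · have h := hf (a - b) b (sub_pos.2 hlt) 1 0
        simp only [mul_zero, zero_add, mul_one, sub_add_cancel] at h
        rw [h]; ring
  · rintro ⟨u, v, ⟨hu0, hu1⟩, ⟨hv0, hv1⟩, hle, hge⟩
    refine ⟨?_, ?_, ?_⟩
    · intro y a b hab
      change f a y ≤ f b y
      rcases le_total y a with hya | hay
      · rw [hge a y hya, hge b y (hya.trans hab)]
        nlinarith
      · rcases le_total b y with hby | hyb
        · rw [hle a y hay, hle b y hby]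
          nlinarith
        · -- The diagonal value `y` lies between the two sides.
          rw [hle a y hay, hge b y hyb]
          nlinarith [mul_nonneg (sub_nonneg.2 hay) (sub_nonneg.2 hv1),
            mul_nonneg (sub_nonneg.2 hyb) hu0]
    · intro x a b hab
      change f x a ≤ f x b
      rcases le_total x a with hxa | hax
      · rw [hle x a hxa, hle x b (hxa.trans hab)]
        nlinarith
      · rcases le_total b x with hbx | hxb
        · rw [hge x a hax, hge x b hbx]
          nlinarith
        · -- The diagonal value `x` lies between the two sides.
          rw [hge x a hax, hle x b hxb]
          nlinarith [mul_nonneg (sub_nonneg.2 hax) (sub_nonneg.2 hu1),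
            mul_nonneg (sub_nonneg.2 hxb) hv0]
    · intro r s hr a b
      rcases le_total a b with hab | hba
      · rw [hle a b hab, hle _ _ (by gcongr)]
        ring
      · rw [hge a b hba, hge _ _ (by gcongr)]
        ring
end

section
/- Let n ≥ 1 and N = {1,…,n}. A function f : ℝⁿ → ℝ is nondecreasing in each variable, comonotonic additive (f(x+x') = f(x)+f(x') whenever x, x' ∈ ℝⁿ are comonotonic), and satisfies f(1,…,1) = 1, if and only if there exists a fuzzy measure μ on N such that f = C_μ, i.e., for every x ∈ ℝⁿ and every permutation σ of N with x_{σ(1)} ≤ … ≤ x_{σ(n)}, f(x) = ∑_{i=1}^n x_{σ(i)} [ μ({σ(i),…,σ(n)}) − μ({σ(i+1),…,σ(n)}) ] (with {σ(n+1),…,σ(n)} = ∅). -/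
/-!
Both directions rest on the horizontal decomposition of a vector: truncating `x` at consecutive
levels `s ≤ t` gives `min x t = min x s + (t - s) • 1_{x ≥ t}` when `x` takes no value strictly
between `s` and `t`, and the two summands are comonotonic.

From `f` to `μ`: put `μ S = f (1_S)`. On each ray `c ↦ f (c • 1_S)`, `c ≥ 0`, the function is
additive and nondecreasing, hence linear (`linear_of_additive_of_mono`). Adding the layers of `x`
one by one along a sorting permutation yields the Choquet formula.

From `μ` to `f`: additivity is immediate, since comonotonic vectors and their sum share a sorting
permutation, and `f (1,…,1) = 1` is a telescoping sum. For monotonicity, the Choquet formula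
compares two comonotonic vectors directly because its coefficients are nonnegative; this covers
multiples of indicators of nested sets. The general case `x ≤ x'` follows by induction
on a finite set of levels containing the values of `x` and `x'`, removing the top layer of each
(`le_of_values_mem`).
-/

/-- Indicator vector of a subset of `Fin n`. -/
def indVec {n : ℕ} (S : Finset (Fin n)) : Fin n → ℝ := fun j => if j ∈ S then 1 else 0

/-- The tail `{σ(k), …, σ(n-1)}`, with `k` a natural number so that `k = n` gives `∅`. -/
def permTail {n : ℕ} (σ : Equiv.Perm (Fin n)) (k : ℕ) : Finset (Fin n) :=
  (Finset.univ.filter (fun i : Fin n => k ≤ i.val)).image σ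

lemma mem_permTail {n : ℕ} (σ : Equiv.Perm (Fin n)) (k : ℕ) (i : Fin n) :
    σ i ∈ permTail σ k ↔ k ≤ i.val := by
  simp [permTail]

lemma image_Ici_eq_permTail {n : ℕ} (σ : Equiv.Perm (Fin n)) (i : Fin n) :
    (Finset.Ici i).image σ = permTail σ i.val := by
  unfold permTail; congr 1; ext j; simp

lemma image_Ioi_eq_permTail {n : ℕ} (σ : Equiv.Perm (Fin n)) (i : Fin n) :
    (Finset.Ioi i).image σ = permTail σ (i.val + 1) := by
  unfold permTail; congr 1; ext j; simp

lemma permTail_zero {n : ℕ} (σ : Equiv.Perm (Fin n)) : permTail σ 0 = Finset.univ := by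
  simp [permTail]

lemma permTail_self {n : ℕ} (σ : Equiv.Perm (Fin n)) : permTail σ n = ∅ := by
  simp [permTail]

/-- A solution of Cauchy's equation on `[0, ∞)` that is nondecreasing is linear: comparing `N * c`
with its integer part gives `N * |g c - c * g 1| ≤ g 1` for every `N`. -/
lemma linear_of_additive_of_mono (g : ℝ → ℝ)
    (hadd : ∀ a b, 0 ≤ a → 0 ≤ b → g (a + b) = g a + g b)
    (hmono : ∀ a b, 0 ≤ a → a ≤ b → g a ≤ g b) (c : ℝ) (hc : 0 ≤ c) : g c = c * g 1 := by
  have hnat : ∀ (N : ℕ) (a : ℝ), 0 ≤ a → g (N * a) = N * g a := by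
    intro N a ha
    induction N with
    | zero =>
      have := hadd 0 0 le_rfl le_rfl
      simp at this
      simp [this]
    | succ k ih =>
      have h := hadd (k * a) a (by positivity) ha
      push_cast
      rw [add_mul, add_mul, one_mul, one_mul, h, ih]
  have h1 : 0 ≤ g 1 := by
    have h0 := hnat 0 0 le_rfl
    have := hmono 0 1 le_rfl zero_le_one
    simp at h0
    linarith
  have key : ∀ N : ℕ, N * |g c - c * g 1| ≤ g 1 := by
    intro N
    have hNc : 0 ≤ (N : ℝ) * c := by positivity
    have hlo := Nat.floor_le hNc
    have hhi := (Nat.lt_floor_add_one ((N : ℝ) * c)).le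
    set k := ⌊(N : ℝ) * c⌋₊
    have e1 := hmono _ _ (Nat.cast_nonneg k) hlo
    have e2 := hmono _ _ hNc hhi
    have e3 := hnat k 1 zero_le_one
    have e4 := hnat (k + 1) 1 zero_le_one
    push_cast at e4
    rw [mul_one] at e3 e4
    rw [hnat N c hc] at e1 e2
    have e5 := mul_le_mul_of_nonneg_right hlo h1
    have e6 := mul_le_mul_of_nonneg_right hhi h1
    rw [← abs_of_nonneg (Nat.cast_nonneg (α := ℝ) N), ← abs_mul, abs_le]
    constructor <;> nlinarith
  by_contra hne
  have hpos : 0 < |g c - c * g 1| := abs_pos.mpr (sub_ne_zero.mpr hne)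
  obtain ⟨N, hN⟩ := exists_nat_gt (g 1 / |g c - c * g 1|)
  rw [div_lt_iff₀ hpos] at hN
  linarith [key N]

/-- The Choquet formula for a comonotonic additive `f` which is linear on the rays spanned by
indicators and on constants, by adding the layers of `x` from the bottom up. -/
lemma choquet_formula_of_additive {n : ℕ} (hn : 1 ≤ n) (f : (Fin n → ℝ) → ℝ)
    (hadd : ∀ x x' : Fin n → ℝ,
        (∃ σ : Equiv.Perm (Fin n),
          Monotone (fun i => x (σ i)) ∧ Monotone (fun i => x' (σ i))) →
        f (x + x') = f x + f x')
    (hconst : ∀ c : ℝ, f (fun _ => c) = c)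
    (hind : ∀ (c : ℝ) (S : Finset (Fin n)), 0 ≤ c → f (c • indVec S) = c * f (indVec S))
    (x : Fin n → ℝ) (σ : Equiv.Perm (Fin n)) (hx : Monotone (fun i => x (σ i))) :
    f x = ∑ i : Fin n, x (σ i) *
      (f (indVec ((Finset.Ici i).image σ)) - f (indVec ((Finset.Ioi i).image σ))) := by
  have hzero : f (indVec ∅) = 0 := by
    have : (indVec ∅ : Fin n → ℝ) = fun _ => 0 := by funext j; simp [indVec]
    rw [this, hconst]
  have huniv : f (indVec Finset.univ) = 1 := by
    have : (indVec Finset.univ : Fin n → ℝ) = fun _ => 1 := by funext j; simp [indVec]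
    rw [this, hconst]
  obtain ⟨Y, hY⟩ : ∃ Y : ℕ → ℝ, ∀ i : Fin n, Y i.val = x (σ i) :=
    ⟨fun k => if h : k < n then x (σ ⟨k, h⟩) else 0, fun i => by simp⟩
  have hYmono : ∀ i k : ℕ, i ≤ k → k < n → Y i ≤ Y k := by
    intro i k hik hk
    have h := hx (show (⟨i, by omega⟩ : Fin n) ≤ ⟨k, hk⟩ from hik)
    simp only [← hY] at h
    exact h
  let G : ℕ → ℝ := fun k => f (indVec (permTail σ k))
  have layers : ∀ k, k < n → f (fun j => min (x j) (Y k)) =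
      ∑ i ∈ Finset.range k, Y i * (G i - G (i + 1)) + Y k * G k := by
    intro k
    induction k with
    | zero =>
      intro h0
      have hmin : (fun j => min (x j) (Y 0)) = fun _ => Y 0 := by
        funext j
        obtain ⟨i, rfl⟩ := σ.surjective j
        rw [← hY]
        exact min_eq_right (hYmono 0 i (Nat.zero_le _) i.isLt)
      rw [hmin, hconst]
      simp [G, permTail_zero, huniv]
    | succ k ih =>
      intro hk
      have hstep : (0 : ℝ) ≤ Y (k + 1) - Y k :=
        sub_nonneg.mpr (hYmono k (k + 1) (Nat.le_succ k) hk)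
      have hsplit : (fun j => min (x j) (Y (k + 1))) =
          (fun j => min (x j) (Y k)) + (Y (k + 1) - Y k) • indVec (permTail σ (k + 1)) := by
        funext j
        obtain ⟨i, rfl⟩ := σ.surjective j
        simp only [Pi.add_apply, Pi.smul_apply, smul_eq_mul, indVec, mem_permTail, ← hY]
        by_cases hi : k + 1 ≤ i.val
        · have h1 := hYmono (k + 1) i hi i.isLt
          rw [if_pos hi, min_eq_right h1, min_eq_right (by linarith)]
          ring
        · have h1 := hYmono i k (by omega) (by omega)
          rw [if_neg hi, min_eq_left h1, min_eq_left (by linarith)]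
          ring
      rw [hsplit, hadd, hind _ _ hstep, ih (by omega), Finset.sum_range_succ]
      · simp only [G]; ring
      · refine ⟨σ, fun a b hab => min_le_min_right _ (hx hab), fun a b hab => ?_⟩
        simp only [Pi.smul_apply, smul_eq_mul, indVec, mem_permTail]
        refine mul_le_mul_of_nonneg_left ?_ hstep
        have hab' : a.val ≤ b.val := hab
        split_ifs <;> first | omega | norm_num
  have hlast := layers (n - 1) (by omega)
  have hmin : (fun j => min (x j) (Y (n - 1))) = x := by
    funext j
    obtain ⟨i, rfl⟩ := σ.surjective j
    rw [← hY]
    exact min_eq_left (hYmono i (n - 1) (by omega) (by omega))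
  have hG : G (n - 1 + 1) = 0 := by
    simp only [G]; rw [Nat.sub_add_cancel hn, permTail_self, hzero]
  have hsum : f x = ∑ i ∈ Finset.range (n - 1 + 1), Y i * (G i - G (i + 1)) := by
    rw [Finset.sum_range_succ, hG, sub_zero, ← hlast, hmin]
  rw [hsum, Nat.sub_add_cancel hn, Finset.sum_range]
  refine Finset.sum_congr rfl fun i _ => ?_
  rw [image_Ici_eq_permTail, image_Ioi_eq_permTail, hY]

/-- Monotonicity for vectors with values in a finite set `V` of levels, by induction on `V`: the
top layer of each vector is split off and the truncations take values in a smaller set. -/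
lemma le_of_values_mem {n : ℕ} (f : (Fin n → ℝ) → ℝ)
    (hadd : ∀ x x' : Fin n → ℝ,
        (∃ σ : Equiv.Perm (Fin n),
          Monotone (fun i => x (σ i)) ∧ Monotone (fun i => x' (σ i))) →
        f (x + x') = f x + f x')
    (hind : ∀ (c : ℝ) (S T : Finset (Fin n)), 0 ≤ c → S ⊆ T →
      f (c • indVec S) ≤ f (c • indVec T))
    (V : Finset ℝ) : ∀ x x' : Fin n → ℝ, (∀ i, x i ∈ V) → (∀ i, x' i ∈ V) → x ≤ x' →
      f x ≤ f x' := by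
  induction V using Finset.induction_on_max with
  | empty =>
    intro x x' hx _ _
    have : x = x' := funext fun i => absurd (hx i) (Finset.notMem_empty _)
    rw [this]
  | insert t W hW ih =>
    intro x x' hx hx' hle
    rcases W.eq_empty_or_nonempty with rfl | hne
    · have : x = x' := funext fun i => by
        have h1 := hx i
        have h2 := hx' i
        simp at h1 h2
        rw [h1, h2]
      rw [this]
    · set s := W.max' hne with hs
      have hsW : s ∈ W := W.max'_mem hne
      have hst : s < t := hW s hsW
      have trunc_mem : ∀ y : Fin n → ℝ, (∀ i, y i ∈ insert t W) → ∀ i, min (y i) s ∈ W := by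
        intro y hy i
        rcases Finset.mem_insert.mp (hy i) with h | h
        · rw [h, min_eq_right hst.le]; exact hsW
        · rw [min_eq_left (W.le_max' _ h)]; exact h
      have split : ∀ y : Fin n → ℝ, (∀ i, y i ∈ insert t W) →
          f y = f (fun i => min (y i) s) +
            f ((t - s) • indVec (Finset.univ.filter fun i => t ≤ y i)) := by
        intro y hy
        rw [← hadd]
        · congr 1
          funext i
          simp only [Pi.add_apply, Pi.smul_apply, smul_eq_mul, indVec, Finset.mem_filter,
            Finset.mem_univ, true_and]
          rcases Finset.mem_insert.mp (hy i) with h | h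
          · rw [h, min_eq_right hst.le, if_pos le_rfl]; ring
          · rw [min_eq_left (W.le_max' _ h), if_neg (not_le.mpr (hW _ h))]; ring
        · -- Both summands are nondecreasing functions of `y`, so a permutation sorting `y` works.
          have hsort : Monotone (fun i => y (Tuple.sort y i)) := Tuple.monotone_sort y
          refine ⟨Tuple.sort y, fun a b hab => min_le_min_right _ (hsort hab),
            fun a b hab => ?_⟩
          simp only [Pi.smul_apply, smul_eq_mul, indVec, Finset.mem_filter,
            Finset.mem_univ, true_and]
          refine mul_le_mul_of_nonneg_left ?_ (sub_nonneg.mpr hst.le)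
          have := hsort hab
          simp only at this
          split_ifs <;> linarith
      rw [split x hx, split x' hx']
      refine add_le_add (ih _ _ (trunc_mem x hx) (trunc_mem x' hx')
        fun i => min_le_min_right _ (hle i)) (hind _ _ _ (sub_nonneg.mpr hst.le) fun i hi => ?_)
      simp only [Finset.mem_filter, Finset.mem_univ, true_and] at hi ⊢
      exact hi.trans (hle i)

/-- **Schmeidler's theorem.**
A function `f : ℝⁿ → ℝ` is nondecreasing, comonotonic additive, and satisfies
`f(1,…,1) = 1` iff there exists a fuzzy measure `μ` on `N = {1,…,n}` such that `f` is the
Choquet integral `C_μ`: for every `x` and every permutation `σ` sorting `x` increasingly,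
`f(x) = ∑ᵢ x_{σ(i)} (μ({σ(i),…,σ(n)}) − μ({σ(i+1),…,σ(n)}))`. -/
theorem schmeidler_choquet (n : ℕ) (hn : 1 ≤ n) (f : (Fin n → ℝ) → ℝ) :
    (Monotone f ∧
     (∀ x x' : Fin n → ℝ,
        (∃ σ : Equiv.Perm (Fin n),
          Monotone (fun i => x (σ i)) ∧ Monotone (fun i => x' (σ i))) →
        f (x + x') = f x + f x') ∧
     f (fun _ => 1) = 1) ↔
    (∃ μ : Finset (Fin n) → ℝ, μ ∅ = 0 ∧ μ Finset.univ = 1 ∧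
       (∀ S T : Finset (Fin n), S ⊆ T → μ S ≤ μ T) ∧
       ∀ (x : Fin n → ℝ) (σ : Equiv.Perm (Fin n)), Monotone (fun i => x (σ i)) →
         f x = ∑ i : Fin n,
           x (σ i) * (μ ((Finset.Ici i).image σ) - μ ((Finset.Ioi i).image σ))) := by
  constructor
  · rintro ⟨hmono, hadd, hone⟩
    -- Permutation sorting the indicator of `S`, hence all its nonnegative multiples.
    have hray : ∀ S : Finset (Fin n), ∃ σ : Equiv.Perm (Fin n), ∀ c : ℝ, 0 ≤ c →
        Monotone (fun i => (c • indVec S) (σ i)) := fun S =>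
      ⟨Tuple.sort (indVec S), fun c hc a b hab =>
        mul_le_mul_of_nonneg_left (Tuple.monotone_sort (indVec S) hab) hc⟩
    have hind : ∀ (c : ℝ) (S : Finset (Fin n)), 0 ≤ c →
        f (c • indVec S) = c * f (indVec S) := by
      intro c S hc
      have := linear_of_additive_of_mono (fun c => f (c • indVec S))
        (fun a b ha hb => by
          obtain ⟨σ, hσ⟩ := hray S
          simp only [add_smul]
          exact hadd _ _ ⟨σ, hσ a ha, hσ b hb⟩)
        (fun a b _ hab => hmono fun i => by
          refine mul_le_mul_of_nonneg_right hab ?_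
          unfold indVec; split_ifs <;> norm_num) c hc
      simpa using this
    have hone' : (indVec Finset.univ : Fin n → ℝ) = fun _ => 1 := by funext j; simp [indVec]
    have hpos : ∀ c : ℝ, 0 ≤ c → f (fun _ => c) = c := by
      intro c hc
      have := hind c Finset.univ hc
      rw [hone', hone, mul_one] at this
      have hc1 : (c • fun _ => 1 : Fin n → ℝ) = fun _ => c := by funext j; simp
      rwa [hc1] at this
    have hconst : ∀ c : ℝ, f (fun _ => c) = c := by
      intro c
      rcases le_total 0 c with hc | hc
      · exact hpos c hc
      · have h := hadd (fun _ => c) (fun _ => -c) ⟨1, monotone_const, monotone_const⟩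
        have h0 : ((fun _ => c) + (fun _ => -c) : Fin n → ℝ) = fun _ => 0 := by
          funext j; simp
        rw [h0, hpos 0 le_rfl, hpos (-c) (by linarith)] at h
        linarith
    refine ⟨fun S => f (indVec S), ?_, ?_, fun S T hST => hmono fun i => ?_,
      choquet_formula_of_additive hn f hadd hconst hind⟩
    · have : (indVec ∅ : Fin n → ℝ) = fun _ => 0 := by funext j; simp [indVec]
      simp only [this, hconst]
    · simp only [hone', hone]
    · unfold indVec
      split_ifs with h1 h2
      · exact le_rfl
      · exact absurd (hST h1) h2
      · exact zero_le_one
      · exact le_rfl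
  · rintro ⟨μ, hμ0, hμ1, hμ, hf⟩
    have hadd : ∀ x x' : Fin n → ℝ,
        (∃ σ : Equiv.Perm (Fin n),
          Monotone (fun i => x (σ i)) ∧ Monotone (fun i => x' (σ i))) →
        f (x + x') = f x + f x' := by
      rintro x x' ⟨σ, h, h'⟩
      rw [hf x σ h, hf x' σ h', hf (x + x') σ (h.add h'), ← Finset.sum_add_distrib]
      exact Finset.sum_congr rfl fun i _ => by rw [Pi.add_apply, add_mul]
    refine ⟨?_, hadd, ?_⟩
    · intro x x' hle
      refine le_of_values_mem f hadd ?_ (Finset.univ.image x ∪ Finset.univ.image x') x x'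
        (fun i => by simp) (fun i => by simp) hle
      intro c S T hc hST
      -- As `S ⊆ T`, the order of `1_S + 1_T` refines the orders of both `1_S` and `1_T`.
      have hsort := Tuple.monotone_sort (indVec S + indVec T)
      set σ := Tuple.sort (indVec S + indVec T)
      have hS : Monotone (fun i => (c • indVec S) (σ i)) := by
        intro a b hab
        refine mul_le_mul_of_nonneg_left ?_ hc
        have h := hsort hab
        have ha := @hST (σ a)
        have hb := @hST (σ b)
        simp only [Function.comp, Pi.add_apply, indVec] at h ⊢
        split_ifs at h ⊢ <;> first | tauto | linarith
      have hT : Monotone (fun i => (c • indVec T) (σ i)) := by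
        intro a b hab
        refine mul_le_mul_of_nonneg_left ?_ hc
        have h := hsort hab
        have ha := @hST (σ a)
        have hb := @hST (σ b)
        simp only [Function.comp, Pi.add_apply, indVec] at h ⊢
        split_ifs at h ⊢ <;> first | tauto | linarith
      rw [hf _ σ hS, hf _ σ hT]
      refine Finset.sum_le_sum fun i _ => mul_le_mul_of_nonneg_right
        (mul_le_mul_of_nonneg_left ?_ hc)
        (sub_nonneg.mpr (hμ _ _ (Finset.image_subset_image Finset.Ioi_subset_Ici_self)))
      have hi := @hST (σ i)
      simp only [indVec]
      split_ifs <;> first | tauto | norm_num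
    · rw [hf (fun _ => 1) 1 monotone_const]
      simp only [one_mul, image_Ici_eq_permTail, image_Ioi_eq_permTail]
      rw [← Finset.sum_range fun k => μ (permTail 1 k) - μ (permTail 1 (k + 1)),
        Finset.sum_range_sub', permTail_zero, permTail_self, hμ0, hμ1, sub_zero]
end

section
/- Let n ≥ 1, N = {1,…,n}, and let μ be a fuzzy measure on N. The following assertions are equivalent: (i) for any S, S' ⊆ N with |S| = |S'| one has μ(S) = μ(S'); (ii) there exists a weight vector ω ∈ [0,1]ⁿ with ∑ᵢ ωᵢ = 1 such that C_μ(x) = ∑_{i=1}^n ωᵢ x_{(i)} for all x ∈ ℝⁿ, where x_{(1)} ≤ … ≤ x_{(n)} is the increasing rearrangement of x (i.e., C_μ is an ordered weighted averaging function); (iii) C_μ is a symmetric function of its n arguments. -/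
/-!
The implications (i) → (ii) → (iii) → (i) are proved in turn.

* (i) → (ii): the weights are `ω i = μ {i, …, n} - μ {i + 1, …, n}`. When `μ` depends only on
  cardinality, these are the increments that occur in the Choquet integral for any sorting
  permutation; they are nonnegative by monotonicity and telescope to `μ N - μ ∅ = 1`.
* (ii) → (iii): permuting the entries of `x` does not change its increasing rearrangement.
* (iii) → (i): the Choquet integral of the indicator of `S` is `μ S` (`choquet_indicator`), and
  the indicators of two sets of equal cardinality differ by a permutation of the arguments.

Both telescoping sums are instances of `sum_increments`.
-/

/-- The discrete Choquet integral of `x : Fin n → ℝ` with respect to a set function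
`μ : 2^N → ℝ`, computed via a permutation `Tuple.sort x` sorting `x` increasingly:
`C_μ(x) = ∑ᵢ x_{(i)} (μ(A_{(i)}) − μ(A_{(i+1)}))` where `A_{(i)} = {(i),…,(n)}`. -/
noncomputable def choquet {n : ℕ} (μ : Finset (Fin n) → ℝ) (x : Fin n → ℝ) : ℝ :=
  ∑ i : Fin n,
    x (Tuple.sort x i) *
      (μ ((Finset.Ici i).image (Tuple.sort x)) - μ ((Finset.Ioi i).image (Tuple.sort x)))

/-- Along a permutation `s` for which membership of `s i` in `S` is upward closed in `i`, the
increments of `μ` on the tails of `s`, taken over those `i` with `s i ∈ S`, add up to `μ S`. -/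
lemma sum_increments {n : ℕ} (μ : Finset (Fin n) → ℝ) (h0 : μ ∅ = 0)
    (s : Equiv.Perm (Fin n)) (S : Finset (Fin n))
    (hS : ∀ i j, i ≤ j → s i ∈ S → s j ∈ S) :
    ∑ i : Fin n, (if s i ∈ S then (1 : ℝ) else 0) *
      (μ ((Finset.Ici i).image s) - μ ((Finset.Ioi i).image s)) = μ S := by
  -- `f k` is the measure of the part of the `k`-th tail lying in `S`; the `i`-th summand is
  -- `f i - f (i + 1)`, both when the tail is contained in `S` and when `s i ∉ S`.
  let f : ℕ → ℝ := fun k => μ ((Finset.univ.filter (fun j : Fin n => k ≤ j.val ∧ s j ∈ S)).image s)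
  have key : ∀ i : Fin n, (if s i ∈ S then (1 : ℝ) else 0) *
      (μ ((Finset.Ici i).image s) - μ ((Finset.Ioi i).image s)) = f i.val - f (i.val + 1) := by
    intro i
    by_cases hi : s i ∈ S
    · have e1 : Finset.Ici i = Finset.univ.filter (fun j : Fin n => i.val ≤ j.val ∧ s j ∈ S) := by
        ext j
        simp only [Finset.mem_Ici, Finset.mem_filter, Finset.mem_univ, true_and]
        exact ⟨fun h => ⟨h, hS i j h hi⟩, fun h => h.1⟩
      have e2 : Finset.Ioi i =
          Finset.univ.filter (fun j : Fin n => i.val + 1 ≤ j.val ∧ s j ∈ S) := by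
        ext j
        simp only [Finset.mem_Ioi, Finset.mem_filter, Finset.mem_univ, true_and]
        exact ⟨fun h => ⟨h, hS i j h.le hi⟩, fun h => h.1⟩
      simp only [hi, if_true, one_mul, f, ← e1, ← e2]
    · have e : Finset.univ.filter (fun j : Fin n => i.val ≤ j.val ∧ s j ∈ S) =
          Finset.univ.filter (fun j : Fin n => i.val + 1 ≤ j.val ∧ s j ∈ S) := by
        ext j
        simp only [Finset.mem_filter, Finset.mem_univ, true_and]
        refine ⟨fun h => ⟨?_, h.2⟩, fun h => ⟨by omega, h.2⟩⟩
        rcases h.1.eq_or_lt with h' | h'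
        · exact absurd (Fin.ext h' ▸ h.2) hi
        · exact h'
      simp only [hi, if_false, zero_mul, f, e, sub_self]
  rw [Finset.sum_congr rfl (fun i _ => key i),
    Fin.sum_univ_eq_sum_range (fun k => f k - f (k + 1)) n, Finset.sum_range_sub']
  have f0 : f 0 = μ S := by
    simp only [f]
    congr 1
    ext a
    simp only [Finset.mem_image, Finset.mem_filter, Finset.mem_univ, true_and, zero_le]
    exact ⟨fun ⟨j, h, e⟩ => e ▸ h, fun h => ⟨s.symm a, by simpa using h, by simp⟩⟩
  have fn : f n = 0 := by
    have e : Finset.univ.filter (fun j : Fin n => n ≤ j.val ∧ s j ∈ S) = ∅ := by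
      ext j
      simp
    simp only [f, e, Finset.image_empty, h0]
  rw [f0, fn, sub_zero]

lemma choquet_indicator {n : ℕ} (μ : Finset (Fin n) → ℝ) (h0 : μ ∅ = 0) (S : Finset (Fin n)) :
    choquet μ (fun i => if i ∈ S then 1 else 0) = μ S := by
  refine sum_increments μ h0 _ S fun i j hij hi => ?_
  have h := Tuple.monotone_sort (fun i => if i ∈ S then (1 : ℝ) else 0) hij
  by_contra hj
  simp only [Function.comp, hi, hj, if_true, if_false] at h
  linarith

/-- **Grabisch's theorem on symmetric Choquet integrals (OWA functions).**
For a fuzzy measure `μ` on `N = {1,…,n}`, the following are equivalent: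
(i) `μ` depends only on cardinality; (ii) `C_μ` is an ordered weighted averaging
function `OWA_ω(x) = ∑ᵢ ωᵢ x_{(i)}` for some weight vector `ω`; (iii) `C_μ` is a
symmetric function. -/
theorem choquet_owa_symmetric (n : ℕ) (hn : 1 ≤ n)
    (μ : Finset (Fin n) → ℝ) (h0 : μ ∅ = 0) (h1 : μ Finset.univ = 1)
    (hmono : ∀ S T : Finset (Fin n), S ⊆ T → μ S ≤ μ T) :
    ((∀ S T : Finset (Fin n), S.card = T.card → μ S = μ T) ↔
      (∃ ω : Fin n → ℝ, (∀ i, ω i ∈ Set.Icc (0 : ℝ) 1) ∧ (∑ i, ω i) = 1 ∧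
        ∀ x : Fin n → ℝ, choquet μ x = ∑ i : Fin n, ω i * x (Tuple.sort x i))) ∧
    ((∀ S T : Finset (Fin n), S.card = T.card → μ S = μ T) ↔
      (∀ (σ : Equiv.Perm (Fin n)) (x : Fin n → ℝ),
        choquet μ (fun i => x (σ i)) = choquet μ x)) := by
  have h12 : (∀ S T : Finset (Fin n), S.card = T.card → μ S = μ T) →
      (∃ ω : Fin n → ℝ, (∀ i, ω i ∈ Set.Icc (0 : ℝ) 1) ∧ (∑ i, ω i) = 1 ∧
        ∀ x : Fin n → ℝ, choquet μ x = ∑ i : Fin n, ω i * x (Tuple.sort x i)) := by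
    intro h
    refine ⟨fun i => μ (Finset.Ici i) - μ (Finset.Ioi i), fun i => ⟨?_, ?_⟩, ?_, fun x => ?_⟩
    · exact sub_nonneg.2 (hmono _ _ Finset.Ioi_subset_Ici_self)
    · have a := hmono _ _ (Finset.subset_univ (Finset.Ici i))
      have b := hmono _ _ (Finset.empty_subset (Finset.Ioi i))
      show μ (Finset.Ici i) - μ (Finset.Ioi i) ≤ 1
      linarith
    · have := sum_increments μ h0 1 Finset.univ (by simp)
      simpa [h1] using this
    · refine Finset.sum_congr rfl fun i _ => ?_
      rw [h _ (Finset.Ici i) (Finset.card_image_of_injective _ (Tuple.sort x).injective),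
        h _ (Finset.Ioi i) (Finset.card_image_of_injective _ (Tuple.sort x).injective), mul_comm]
  have h23 : (∃ ω : Fin n → ℝ, (∀ i, ω i ∈ Set.Icc (0 : ℝ) 1) ∧ (∑ i, ω i) = 1 ∧
        ∀ x : Fin n → ℝ, choquet μ x = ∑ i : Fin n, ω i * x (Tuple.sort x i)) →
      (∀ (σ : Equiv.Perm (Fin n)) (x : Fin n → ℝ),
        choquet μ (fun i => x (σ i)) = choquet μ x) := by
    rintro ⟨ω, -, -, h⟩ σ x
    rw [h, h]
    refine Finset.sum_congr rfl fun i _ => ?_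
    congr 1
    exact congrFun (Tuple.comp_perm_comp_sort_eq_comp_sort (f := x) (σ := σ)) i
  have h31 : (∀ (σ : Equiv.Perm (Fin n)) (x : Fin n → ℝ),
        choquet μ (fun i => x (σ i)) = choquet μ x) →
      (∀ S T : Finset (Fin n), S.card = T.card → μ S = μ T) := by
    intro h S T hST
    let e : {i // i ∈ S} ≃ {i // i ∈ T} := Finset.equivOfCardEq hST
    have hσ : ∀ i, e.extendSubtype i ∈ T ↔ i ∈ S := fun i =>
      ⟨fun hi => by_contra fun hn => e.extendSubtype_not_mem i hn hi, e.extendSubtype_mem i⟩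
    have := h e.extendSubtype (fun i => if i ∈ T then 1 else 0)
    simp only [hσ] at this
    rwa [choquet_indicator μ h0, choquet_indicator μ h0] at this
  exact ⟨⟨h12, fun h => h31 (h23 h)⟩, ⟨fun h => h23 (h12 h), h31⟩⟩
end

section
/- Let n ≥ 1, N = {1,…,n}, and let μ be a fuzzy measure on N. A function A : [0,1]ⁿ → [0,1] is nondecreasing in each variable, idempotent (A(x,…,x)=x), comonotonic minitive, and comonotonic maxitive if and only if there exists a fuzzy measure μ on N such that A = S_μ, where S_μ(x) = ⋁_{T ⊆ N} [ μ(T) ∧ ( ⋀_{i∈T} xᵢ ) ] is the discrete Sugeno integral (with ∧ = min, ∨ = max, and the empty-set term omitted or taken as μ(∅)=0). -/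
/-!
Everything is read off from strict superlevel sets. For a monotone `μ` with `μ(N) = 1` and `c ≥ 0`,
`c < S_μ(x)` holds iff `c < μ {i | c < xᵢ}` (`lt_sugeno_iff`), and two nonnegative numbers with the
same strict lower bounds in `[0, ∞)` agree. The axioms hold for `S_μ` because the superlevel sets of
`x ∧ x'` and `x ∨ x'` are the intersection and union of those of `x` and `x'`, and comonotonicity
makes the latter two sets nested (`Comonotonic.level_nested`).

Conversely, put `μ(T) = A(1_T)`, and let `B` be the indicator of `{i | c < xᵢ}`. Then
`d ∧ B ≤ x ≤ c ∨ B` for some `d > c`, and a constant vector is comonotonic with `B`, so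
`d ∧ A(B) ≤ A(x) ≤ c ∨ A(B)`. Hence `c < A(x)` iff `c < μ {i | c < xᵢ}`, which is the criterion
for `S_μ(x)`.
-/

/-- The discrete Sugeno integral of `x : Fin n → ℝ` with respect to a set function
`μ : 2^N → ℝ`: `S_μ(x) = ⋁_{T ⊆ N} (μ(T) ∧ ⋀_{i∈T} xᵢ)` (with `∧` = min, `∨` = max).
The empty fold initial values `0` and `1` realize the empty-set term `μ(∅) ∧ (⋀_{i∈∅}) = 0`
for `x` with values in `[0,1]`. -/
def sugeno {n : ℕ} (μ : Finset (Fin n) → ℝ) (x : Fin n → ℝ) : ℝ :=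
  Finset.univ.fold max 0 (fun T : Finset (Fin n) => min (μ T) (T.fold min 1 x))

/-- Two vectors are comonotonic if some permutation sorts both increasingly. -/
def Comonotonic {n : ℕ} (x x' : Fin n → ℝ) : Prop :=
  ∃ σ : Equiv.Perm (Fin n), Monotone (fun i => x (σ i)) ∧ Monotone (fun i => x' (σ i))

lemma eq_of_lt_iff_of_nonneg {a b : ℝ} (ha : 0 ≤ a) (hb : 0 ≤ b)
    (h : ∀ c, 0 ≤ c → (c < a ↔ c < b)) : a = b := by
  apply le_antisymm
  · by_contra! hlt
    exact lt_irrefl _ ((h b hb).1 hlt)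
  · by_contra! hlt
    exact lt_irrefl _ ((h a ha).2 hlt)

lemma sugeno_nonneg {n : ℕ} (μ : Finset (Fin n) → ℝ) (x : Fin n → ℝ) : 0 ≤ sugeno μ x := by
  unfold sugeno
  rw [Finset.le_fold_max]
  exact Or.inl le_rfl

/-- The strict superlevel set `{i | c < xᵢ}`. -/
noncomputable def level {n : ℕ} (x : Fin n → ℝ) (c : ℝ) : Finset (Fin n) :=
  Finset.univ.filter (fun i => c < x i)

lemma mem_level {n : ℕ} {x : Fin n → ℝ} {c : ℝ} {i : Fin n} : i ∈ level x c ↔ c < x i := by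
  simp [level]

/-- Among the sets `T` with `c < xᵢ` on `T`, the superlevel set is the largest, so by monotonicity
it alone decides whether the Sugeno integral exceeds `c`. -/
lemma lt_sugeno_iff {n : ℕ} {μ : Finset (Fin n) → ℝ} (h1 : μ Finset.univ = 1)
    (hm : ∀ S T : Finset (Fin n), S ⊆ T → μ S ≤ μ T) (x : Fin n → ℝ) {c : ℝ} (hc : 0 ≤ c) :
    c < sugeno μ x ↔ c < μ (level x c) := by
  unfold sugeno
  rw [Finset.lt_fold_max]
  constructor
  · rintro (h | ⟨T, -, h⟩)
    · exact absurd h hc.not_gt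
    · rw [lt_min_iff, Finset.lt_fold_min] at h
      exact h.1.trans_le (hm _ _ fun i hi => mem_level.2 (h.2.2 i hi))
  · intro h
    refine Or.inr ⟨level x c, Finset.mem_univ _, lt_min h ?_⟩
    rw [Finset.lt_fold_min]
    exact ⟨h.trans_le (h1 ▸ hm _ _ (Finset.subset_univ _)), fun i hi => mem_level.1 hi⟩

lemma level_min {n : ℕ} (x y : Fin n → ℝ) (c : ℝ) :
    level (fun i => min (x i) (y i)) c = level x c ∩ level y c := by
  ext i; simp [mem_level]

lemma level_max {n : ℕ} (x y : Fin n → ℝ) (c : ℝ) :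
    level (fun i => max (x i) (y i)) c = level x c ∪ level y c := by
  ext i; simp [mem_level]

lemma Comonotonic.level_nested {n : ℕ} {x y : Fin n → ℝ} (h : Comonotonic x y) (c : ℝ) :
    level x c ⊆ level y c ∨ level y c ⊆ level x c := by
  obtain ⟨σ, hx, hy⟩ := h
  by_contra! hcon
  obtain ⟨h1, h2⟩ := hcon
  obtain ⟨i, hi, hi'⟩ := Finset.not_subset.1 h1
  obtain ⟨j, hj, hj'⟩ := Finset.not_subset.1 h2
  rw [mem_level] at hi hj hi' hj'
  rcases le_total (σ.symm i) (σ.symm j) with hij | hij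
  · have := hx hij
    simp only [Equiv.apply_symm_apply] at this
    linarith
  · have := hy hij
    simp only [Equiv.apply_symm_apply] at this
    linarith

lemma comonotonic_const {n : ℕ} (c : ℝ) (x : Fin n → ℝ) : Comonotonic (fun _ => c) x :=
  ⟨Tuple.sort x, fun _ _ _ => le_rfl, Tuple.monotone_sort x⟩

/-- The indicator vector `1_T`. -/
noncomputable def ind {n : ℕ} (T : Finset (Fin n)) : Fin n → ℝ := fun i => if i ∈ T then 1 else 0

lemma ind_mem {n : ℕ} (T : Finset (Fin n)) (i : Fin n) : ind T i ∈ Set.Icc (0 : ℝ) 1 := by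
  unfold ind; split_ifs <;> simp

/-- A minimum over the finite set `level x c` leaves a gap above `c`. -/
lemma exists_gap {n : ℕ} (x : Fin n → ℝ) {c : ℝ} (hc : c < 1) :
    ∃ d, c < d ∧ d ≤ 1 ∧ ∀ i ∈ level x c, d ≤ x i := by
  have h := (Finset.le_fold_min (s := level x c) (f := x) (b := (1 : ℝ))
    ((level x c).fold min 1 x)).1 le_rfl
  refine ⟨(level x c).fold min 1 x, ?_, h.1, h.2⟩
  rw [Finset.lt_fold_min]
  exact ⟨hc, fun i hi => mem_level.1 hi⟩

/-- **Marichal's axiomatization of the Sugeno integral.**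
A function `A : [0,1]ⁿ → [0,1]` is nondecreasing, idempotent, comonotonic minitive, and
comonotonic maxitive iff there is a fuzzy measure `μ` on `N = {1,…,n}` with `A = S_μ`. -/
theorem sugeno_characterization (n : ℕ) (hn : 1 ≤ n)
    (A : (Fin n → ℝ) → ℝ)
    (hmaps : ∀ x : Fin n → ℝ, (∀ i, x i ∈ Set.Icc (0 : ℝ) 1) → A x ∈ Set.Icc (0 : ℝ) 1) :
    ((∀ x y : Fin n → ℝ, (∀ i, x i ∈ Set.Icc (0 : ℝ) 1) →
        (∀ i, y i ∈ Set.Icc (0 : ℝ) 1) → x ≤ y → A x ≤ A y) ∧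
     (∀ c ∈ Set.Icc (0 : ℝ) 1, A (fun _ => c) = c) ∧
     (∀ x x' : Fin n → ℝ, (∀ i, x i ∈ Set.Icc (0 : ℝ) 1) →
        (∀ i, x' i ∈ Set.Icc (0 : ℝ) 1) → Comonotonic x x' →
        A (fun i => min (x i) (x' i)) = min (A x) (A x')) ∧
     (∀ x x' : Fin n → ℝ, (∀ i, x i ∈ Set.Icc (0 : ℝ) 1) →
        (∀ i, x' i ∈ Set.Icc (0 : ℝ) 1) → Comonotonic x x' →
        A (fun i => max (x i) (x' i)) = max (A x) (A x'))) ↔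
    (∃ μ : Finset (Fin n) → ℝ, μ ∅ = 0 ∧ μ Finset.univ = 1 ∧
       (∀ S T : Finset (Fin n), S ⊆ T → μ S ≤ μ T) ∧
       ∀ x : Fin n → ℝ, (∀ i, x i ∈ Set.Icc (0 : ℝ) 1) → A x = sugeno μ x) := by
  constructor
  · rintro ⟨hmono, hid, hmin, hmax⟩
    have hμ0 : A (ind ∅) = 0 := by
      rw [← hid 0 (by simp)]; congr 1
    have hμ1 : A (ind Finset.univ) = 1 := by
      rw [← hid 1 (by simp)]; congr 1; ext i; simp [ind]
    have hμm : ∀ S T : Finset (Fin n), S ⊆ T → A (ind S) ≤ A (ind T) := by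
      intro S T hST
      refine hmono _ _ (ind_mem S) (ind_mem T) fun i => ?_
      by_cases hi : i ∈ S
      · simp [ind, hi, hST hi]
      · simpa [ind, hi] using (ind_mem T i).1
    refine ⟨fun T => A (ind T), hμ0, hμ1, hμm, fun x hx => ?_⟩
    refine eq_of_lt_iff_of_nonneg (hmaps x hx).1 (sugeno_nonneg _ _) fun c hc => ?_
    rw [lt_sugeno_iff (μ := fun T => A (ind T)) hμ1 hμm x hc]
    have hB := ind_mem (level x c)
    rcases le_or_gt 1 c with h1 | h1
    · exact iff_of_false ((hmaps x hx).2.trans h1).not_gt ((hmaps _ hB).2.trans h1).not_gt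
    constructor
    · intro h
      have hcI : c ∈ Set.Icc (0 : ℝ) 1 := ⟨hc, h1.le⟩
      have hle : A x ≤ A (fun i => max c (ind (level x c) i)) := by
        refine hmono _ _ hx (fun i => ⟨le_max_of_le_left hc, max_le h1.le (hB i).2⟩) fun i => ?_
        by_cases hi : i ∈ level x c
        · exact le_max_of_le_right (by simpa [ind, hi] using (hx i).2)
        · exact le_max_of_le_left (not_lt.1 fun h' => hi (mem_level.2 h'))
      rw [hmax (fun _ => c) _ (fun _ => hcI) hB (comonotonic_const _ _), hid c hcI] at hle
      exact (lt_max_iff.1 (h.trans_le hle)).resolve_left (lt_irrefl c)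
    · intro h
      obtain ⟨d, hcd, hd1, hd⟩ := exists_gap x h1
      have hdI : d ∈ Set.Icc (0 : ℝ) 1 := ⟨hc.trans hcd.le, hd1⟩
      have hle : A (fun i => min d (ind (level x c) i)) ≤ A x := by
        refine hmono _ _ (fun i => ⟨le_min hdI.1 (hB i).1, min_le_of_left_le hd1⟩) hx fun i => ?_
        by_cases hi : i ∈ level x c
        · exact min_le_of_left_le (hd i hi)
        · exact min_le_of_right_le (by simpa [ind, hi] using (hx i).1)
      rw [hmin (fun _ => d) _ (fun _ => hdI) hB (comonotonic_const _ _), hid d hdI] at hle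
      exact (lt_min hcd h).trans_le hle
  · rintro ⟨μ, h0, h1, hm, hA⟩
    have key : ∀ x : Fin n → ℝ, (∀ i, x i ∈ Set.Icc (0 : ℝ) 1) → ∀ c, 0 ≤ c →
        (c < A x ↔ c < μ (level x c)) := fun x hx c hc => by
      rw [hA x hx]; exact lt_sugeno_iff h1 hm x hc
    refine ⟨fun x y hx hy hxy => ?_, fun d hd => ?_, fun x y hx hy hco => ?_,
      fun x y hx hy hco => ?_⟩
    · by_contra! hlt
      have hc := (hmaps y hy).1
      have hlev : level x (A y) ⊆ level y (A y) := fun i hi =>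
        mem_level.2 ((mem_level.1 hi).trans_le (hxy i))
      exact lt_irrefl _
        ((key y hy _ hc).2 (((key x hx _ hc).1 hlt).trans_le (hm _ _ hlev)))
    · refine eq_of_lt_iff_of_nonneg (hmaps _ fun _ => hd).1 hd.1 fun c hc => ?_
      rw [key _ (fun _ => hd) c hc]
      by_cases hcd : c < d
      · simp [level, hcd, h1, hcd.trans_le hd.2]
      · simp [level, hcd, h0, hc]
    · have hI : ∀ i, min (x i) (y i) ∈ Set.Icc (0 : ℝ) 1 := fun i =>
        ⟨le_min (hx i).1 (hy i).1, min_le_of_left_le (hx i).2⟩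
      refine eq_of_lt_iff_of_nonneg (hmaps _ hI).1
        (le_min (hmaps x hx).1 (hmaps y hy).1) fun c hc => ?_
      rw [key _ hI c hc, lt_min_iff, key x hx c hc, key y hy c hc, level_min]
      rcases hco.level_nested c with h | h
      · rw [Finset.inter_eq_left.2 h]
        exact ⟨fun h' => ⟨h', h'.trans_le (hm _ _ h)⟩, fun h' => h'.1⟩
      · rw [Finset.inter_eq_right.2 h]
        exact ⟨fun h' => ⟨h'.trans_le (hm _ _ h), h'⟩, fun h' => h'.2⟩
    · have hI : ∀ i, max (x i) (y i) ∈ Set.Icc (0 : ℝ) 1 := fun i =>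
        ⟨le_max_of_le_left (hx i).1, max_le (hx i).2 (hy i).2⟩
      refine eq_of_lt_iff_of_nonneg (hmaps _ hI).1
        (le_max_of_le_left (hmaps x hx).1) fun c hc => ?_
      rw [key _ hI c hc, lt_max_iff, key x hx c hc, key y hy c hc, level_max]
      rcases hco.level_nested c with h | h
      · rw [Finset.union_eq_right.2 h]
        exact ⟨Or.inr, fun h' => h'.elim (fun h' => h'.trans_le (hm _ _ h)) id⟩
      · rw [Finset.union_eq_left.2 h]
        exact ⟨Or.inl, fun h' => h'.elim id fun h' => h'.trans_le (hm _ _ h)⟩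
end

section
/- Let n ≥ 1, N = {1,…,n}, and let μ be a fuzzy measure on N. The Sugeno integral S_μ satisfies S_μ(x₁∨x'₁,…,xₙ∨x'ₙ) = S_μ(x) ∨ S_μ(x') for all x, x' ∈ [0,1]ⁿ if and only if μ is a possibility measure (μ(S∪T) = μ(S) ∨ μ(T) for all S,T ⊆ N), and this holds if and only if there exists ω ∈ [0,1]ⁿ with ⋁_{i=1}^n ωᵢ = 1 such that S_μ(x) = ⋁_{i=1}^n (ωᵢ ∧ xᵢ) for all x ∈ [0,1]ⁿ (i.e., S_μ is a weighted maximum). -/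
theorem le_sugeno {n : ℕ} (μ : Finset (Fin n) → ℝ) (x : Fin n → ℝ) (T : Finset (Fin n)) :
    min (μ T) (T.fold min 1 x) ≤ sugeno μ x :=
  (Finset.le_fold_max _).2 (Or.inr ⟨T, Finset.mem_univ T, le_rfl⟩)

/-- `S_μ` extends `μ` when sets are identified with their indicator vectors. -/
theorem sugeno_indicator {n : ℕ} (μ : Finset (Fin n) → ℝ) (h0 : μ ∅ = 0)
    (h1 : μ Finset.univ = 1) (hmono : ∀ S T : Finset (Fin n), S ⊆ T → μ S ≤ μ T)
    (S : Finset (Fin n)) : sugeno μ (fun i => if i ∈ S then 1 else 0) = μ S := by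
  have hS0 : 0 ≤ μ S := h0 ▸ hmono _ _ (Finset.empty_subset S)
  have hS1 : μ S ≤ 1 := h1 ▸ hmono _ _ (Finset.subset_univ S)
  apply le_antisymm
  · refine (Finset.fold_max_le _).2 ⟨hS0, fun T _ => ?_⟩
    by_cases hT : T ⊆ S
    · exact (min_le_left _ _).trans (hmono _ _ hT)
    · obtain ⟨i, hiT, hiS⟩ := Finset.not_subset.1 hT
      refine (min_le_right _ _).trans (le_trans ?_ hS0)
      exact (Finset.fold_min_le _).2 (Or.inr ⟨i, hiT, by simp [hiS]⟩)
  · refine le_trans (le_min le_rfl ?_) (le_sugeno μ _ S)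
    exact (Finset.le_fold_min _).2 ⟨hS1, fun i hi => by simpa [hi] using hS1⟩

theorem possibility_eq_fold {n : ℕ} (μ : Finset (Fin n) → ℝ) (h0 : μ ∅ = 0)
    (hposs : ∀ S T : Finset (Fin n), μ (S ∪ T) = max (μ S) (μ T)) (T : Finset (Fin n)) :
    μ T = T.fold max 0 (fun i => μ {i}) := by
  induction T using Finset.induction_on with
  | empty => simpa using h0
  | insert a s ha ih => rw [Finset.fold_insert ha, ← ih, ← hposs, Finset.insert_eq]

theorem sugeno_eq_pmax {n : ℕ} (μ : Finset (Fin n) → ℝ) (h0 : μ ∅ = 0)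
    (hposs : ∀ S T : Finset (Fin n), μ (S ∪ T) = max (μ S) (μ T))
    (x : Fin n → ℝ) (hx : ∀ i, x i ∈ Set.Icc (0 : ℝ) 1) :
    sugeno μ x = Finset.univ.fold max 0 (fun i => min (μ {i}) (x i)) := by
  apply le_antisymm
  · refine (Finset.fold_max_le _).2 ⟨(Finset.le_fold_max _).2 (Or.inl le_rfl), fun T _ => ?_⟩
    refine le_of_forall_lt fun c hc => (Finset.lt_fold_max _).2 ?_
    obtain ⟨hcμ, hcx⟩ := lt_min_iff.1 hc
    rw [possibility_eq_fold μ h0 hposs T] at hcμ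
    -- Some `i ∈ T` carries enough of the weight of `T`, and every `x i` with `i ∈ T` exceeds `c`.
    rcases (Finset.lt_fold_max _).1 hcμ with hc0 | ⟨i, hi, hci⟩
    · exact Or.inl hc0
    · exact Or.inr ⟨i, Finset.mem_univ i, lt_min hci (((Finset.lt_fold_min _).1 hcx).2 i hi)⟩
  · refine (Finset.fold_max_le _).2 ⟨(Finset.le_fold_max _).2 (Or.inl le_rfl), fun i _ => ?_⟩
    have h := le_sugeno μ x {i}
    rwa [Finset.fold_singleton, min_eq_left (hx i).2] at h

theorem pmax_max {n : ℕ} (ω x x' : Fin n → ℝ) :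
    Finset.univ.fold max 0 (fun i => min (ω i) (max (x i) (x' i))) =
      max (Finset.univ.fold max 0 (fun i => min (ω i) (x i)))
        (Finset.univ.fold max 0 (fun i => min (ω i) (x' i))) := by
  rw [← Finset.fold_op_distrib (op := max), max_self]
  simp only [min_max_distrib_left]

/-- **Maxitive Sugeno integrals are weighted maxima.**
For a fuzzy measure `μ` on `N = {1,…,n}`: the Sugeno integral `S_μ` is maxitive on
`[0,1]ⁿ` iff `μ` is a possibility measure, and this holds iff there exists
`ω ∈ [0,1]ⁿ` with `⋁ᵢ ωᵢ = 1` such that `S_μ(x) = ⋁ᵢ (ωᵢ ∧ xᵢ)`, i.e. `S_μ` is the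
weighted maximum `pmax_ω`. -/
theorem sugeno_maxitive_possibility (n : ℕ) (hn : 1 ≤ n)
    (μ : Finset (Fin n) → ℝ) (h0 : μ ∅ = 0) (h1 : μ Finset.univ = 1)
    (hmono : ∀ S T : Finset (Fin n), S ⊆ T → μ S ≤ μ T) :
    ((∀ x x' : Fin n → ℝ, (∀ i, x i ∈ Set.Icc (0 : ℝ) 1) →
        (∀ i, x' i ∈ Set.Icc (0 : ℝ) 1) →
        sugeno μ (fun i => max (x i) (x' i)) = max (sugeno μ x) (sugeno μ x')) ↔
      (∀ S T : Finset (Fin n), μ (S ∪ T) = max (μ S) (μ T))) ∧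
    ((∀ S T : Finset (Fin n), μ (S ∪ T) = max (μ S) (μ T)) ↔
      (∃ ω : Fin n → ℝ, (∀ i, ω i ∈ Set.Icc (0 : ℝ) 1) ∧
        Finset.univ.fold max 0 ω = 1 ∧
        ∀ x : Fin n → ℝ, (∀ i, x i ∈ Set.Icc (0 : ℝ) 1) →
          sugeno μ x = Finset.univ.fold max 0 (fun i => min (ω i) (x i)))) := by
  have possibility_of_maxitive : (∀ x x' : Fin n → ℝ, (∀ i, x i ∈ Set.Icc (0 : ℝ) 1) →
        (∀ i, x' i ∈ Set.Icc (0 : ℝ) 1) →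
        sugeno μ (fun i => max (x i) (x' i)) = max (sugeno μ x) (sugeno μ x')) →
      (∀ S T : Finset (Fin n), μ (S ∪ T) = max (μ S) (μ T)) := by
    intro h S T
    have hind : ∀ (S : Finset (Fin n)) (i : Fin n),
        (if i ∈ S then (1 : ℝ) else 0) ∈ Set.Icc (0 : ℝ) 1 := by
      intro S i
      split_ifs <;> simp
    rw [← sugeno_indicator μ h0 h1 hmono S, ← sugeno_indicator μ h0 h1 hmono T,
      ← h _ _ (hind S) (hind T), ← sugeno_indicator μ h0 h1 hmono (S ∪ T)]
    congr 1
    funext i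
    by_cases hS : i ∈ S <;> by_cases hT : i ∈ T <;> simp [hS, hT]
  refine ⟨⟨possibility_of_maxitive, fun h x x' hx hx' => ?_⟩, fun h => ?_, ?_⟩
  · rw [sugeno_eq_pmax μ h0 h x hx, sugeno_eq_pmax μ h0 h x' hx', sugeno_eq_pmax μ h0 h _
      (fun i => ⟨le_max_of_le_left (hx i).1, max_le (hx i).2 (hx' i).2⟩), pmax_max]
  · refine ⟨fun i => μ {i}, fun i => ⟨?_, ?_⟩, ?_, sugeno_eq_pmax μ h0 h⟩
    · exact h0 ▸ hmono _ _ (Finset.empty_subset {i})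
    · exact h1 ▸ hmono _ _ (Finset.subset_univ {i})
    · rw [← possibility_eq_fold μ h0 h, h1]
  · rintro ⟨ω, -, -, hω⟩
    refine possibility_of_maxitive fun x x' hx hx' => ?_
    rw [hω x hx, hω x' hx', hω _
      (fun i => ⟨le_max_of_le_left (hx i).1, max_le (hx i).2 (hx' i).2⟩), pmax_max]
end

section
/- Let n ≥ 1 and N = {1,…,n}. A function A : ℝⁿ → ℝ is nondecreasing in each variable and satisfies A(φ(x₁),…,φ(xₙ)) = φ(A(x₁,…,xₙ)) for every strictly increasing bijection φ : ℝ → ℝ and every x ∈ ℝⁿ, if and only if there exists a set function γ : 2^N → {0,1} with γ(∅)=0, γ(N)=1, and γ(S) ≤ γ(T) for S ⊆ T, such that A(x) = ⋁_{S ⊆ N, γ(S)=1} ⋀_{i∈S} xᵢ for all x ∈ ℝⁿ (i.e., A is a lattice polynomial in disjunctive form). -/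
/-!
Both directions rest on describing a function `ℝⁿ → ℝ` by its superlevel sets. The lattice polynomial
`L_γ` is characterised by `t ≤ L_γ x ↔ ∃ S, γ S ∧ ∀ i ∈ S, t ≤ x i` (`le_latticePoly_iff`), a
condition that is visibly monotone in `x` and compatible with order isomorphisms.

Conversely, let `A` be monotone and commute with the increasing bijections, and put `γ S = 1` iff
`A 1_S = 1`. Commuting with `t ↦ 2 t` gives `A 0 = 0`, and since `1_S` is fixed by `t ↦ t ^ 3`, so is
`A 1_S ≥ 0`; hence `A 1_S ∈ {0, 1}`. Affine rescaling then determines `A` on all two-valued vectors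
(`apply_twoValued`), and comparing an arbitrary `x` with two-valued vectors from below and from above
gives the same superlevel sets for `A` as for `L_γ`.
-/

/-- Superlevel sets of the lattice polynomial. The hypothesis `γ ∅ = false` keeps the junk value
`sInf ∅ = 0` out of the supremum. -/
lemma le_latticePoly_iff {n : ℕ} {γ : Finset (Fin n) → Bool} (h0 : γ ∅ = false)
    (h1 : γ Finset.univ = true) (x : Fin n → ℝ) (t : ℝ) :
    t ≤ sSup {y : ℝ | ∃ S : Finset (Fin n), γ S = true ∧ y = sInf (x '' (S : Set (Fin n)))} ↔
      ∃ S : Finset (Fin n), γ S = true ∧ ∀ i ∈ S, t ≤ x i := by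
  set Y := {y : ℝ | ∃ S : Finset (Fin n), γ S = true ∧ y = sInf (x '' (S : Set (Fin n)))} with hY
  have hfin : Y.Finite := by
    refine (Set.finite_range fun S : Finset (Fin n) => sInf (x '' (S : Set (Fin n)))).subset ?_
    rintro y ⟨S, -, rfl⟩
    exact ⟨S, rfl⟩
  have hne : Y.Nonempty := ⟨_, Finset.univ, h1, rfl⟩
  constructor
  · intro ht
    obtain ⟨S, hS, hy⟩ := hne.csSup_mem hfin
    refine ⟨S, hS, fun i hi => ht.trans ?_⟩
    rw [hy]
    exact csInf_le (S.finite_toSet.image x).bddBelow ⟨i, hi, rfl⟩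
  · rintro ⟨S, hS, hx⟩
    have hSne : S.Nonempty := by
      rw [Finset.nonempty_iff_ne_empty]
      rintro rfl
      simp [h0] at hS
    refine le_trans ?_ (le_csSup hfin.bddAbove ⟨S, hS, rfl⟩)
    refine le_csInf (Set.Nonempty.image x hSne) ?_
    rintro _ ⟨i, hi, rfl⟩
    exact hx i hi

lemma cube_strictMono_bijective :
    StrictMono (fun t : ℝ => t ^ 3) ∧ Function.Bijective (fun t : ℝ => t ^ 3) := by
  have hodd : Odd 3 := by decide
  have hm : StrictMono (fun t : ℝ => t ^ 3) := hodd.strictMono_pow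
  refine ⟨hm, hm.injective, ?_⟩
  exact (continuous_pow 3).surjective (Filter.tendsto_pow_atTop (by norm_num))
    (Filter.tendsto_atBot.2 fun b => by
      filter_upwards [Filter.eventually_le_atBot (min b (-1))] with t ht
      have h1 : t ≤ b := ht.trans (min_le_left _ _)
      have h2 : t ≤ -1 := ht.trans (min_le_right _ _)
      -- `t ^ 3 ≤ t` for `t ≤ -1`, because `t - t ^ 3 = (-t) * (-t - 1) * (-t + 1)`.
      nlinarith [mul_nonneg (mul_nonneg (neg_nonneg.2 (h2.trans (by norm_num)))
        (by linarith : 0 ≤ -t - 1)) (by linarith : 0 ≤ -t + 1)])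

lemma affine_strictMono_bijective (a c : ℝ) (hc : 0 < c) :
    StrictMono (fun t : ℝ => a + c * t) ∧ Function.Bijective (fun t : ℝ => a + c * t) := by
  have hm : StrictMono (fun t : ℝ => a + c * t) := fun s t hst => by
    have := mul_lt_mul_of_pos_left hst hc
    simpa using this
  refine ⟨hm, hm.injective, fun y => ⟨(y - a) / c, ?_⟩⟩
  field_simp
  ring

section Meaningful

variable {n : ℕ} {A : (Fin n → ℝ) → ℝ}

lemma apply_zero_of_meaningful
    (hφ : ∀ φ : ℝ → ℝ, StrictMono φ → Function.Bijective φ →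
      ∀ x : Fin n → ℝ, A (fun i => φ (x i)) = φ (A x)) :
    A (fun _ => 0) = 0 := by
  obtain ⟨h1, h2⟩ := affine_strictMono_bijective 0 2 two_pos
  have h := hφ _ h1 h2 (fun _ => 0)
  simp only [mul_zero, add_zero] at h
  linarith

lemma apply_indicator_of_meaningful (hA : Monotone A)
    (hφ : ∀ φ : ℝ → ℝ, StrictMono φ → Function.Bijective φ →
      ∀ x : Fin n → ℝ, A (fun i => φ (x i)) = φ (A x)) (S : Finset (Fin n)) :
    A (fun i => if i ∈ S then 1 else 0) = 0 ∨ A (fun i => if i ∈ S then 1 else 0) = 1 := by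
  have hnn : 0 ≤ A (fun i => if i ∈ S then 1 else 0) := by
    refine (apply_zero_of_meaningful hφ).ge.trans (hA ?_)
    intro i
    dsimp only
    split_ifs <;> norm_num
  have h := hφ _ cube_strictMono_bijective.1 cube_strictMono_bijective.2
    (fun i => if i ∈ S then 1 else 0)
  have hfix : (fun i => (if i ∈ S then (1 : ℝ) else 0) ^ 3) = fun i => if i ∈ S then 1 else 0 := by
    funext i
    split_ifs <;> norm_num
  rw [hfix] at h
  generalize A (fun i => if i ∈ S then 1 else 0) = v at *
  have hv : v * ((v - 1) * (v + 1)) = 0 := by linear_combination -h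
  rcases mul_eq_zero.1 hv with h0 | h1
  · exact Or.inl h0
  · rcases mul_eq_zero.1 h1 with h1 | h1
    · exact Or.inr (by linarith)
    · linarith

/-- Two-valued vectors are the increasing affine images of indicators. -/
lemma apply_twoValued
    (hφ : ∀ φ : ℝ → ℝ, StrictMono φ → Function.Bijective φ →
      ∀ x : Fin n → ℝ, A (fun i => φ (x i)) = φ (A x)) (S : Finset (Fin n))
    {a b : ℝ} (hab : a < b) :
    A (fun i => if i ∈ S then b else a) =
      a + (b - a) * A (fun i => if i ∈ S then 1 else 0) := by
  obtain ⟨h1, h2⟩ := affine_strictMono_bijective a (b - a) (sub_pos.2 hab)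
  rw [← hφ _ h1 h2]
  congr 1
  funext i
  split_ifs <;> ring

lemma le_apply_iff_of_meaningful (hA : Monotone A)
    (hφ : ∀ φ : ℝ → ℝ, StrictMono φ → Function.Bijective φ →
      ∀ x : Fin n → ℝ, A (fun i => φ (x i)) = φ (A x)) (x : Fin n → ℝ) (t : ℝ) :
    t ≤ A x ↔ ∃ S : Finset (Fin n),
      A (fun i => if i ∈ S then 1 else 0) = 1 ∧ ∀ i ∈ S, t ≤ x i := by
  constructor
  · intro ht
    refine ⟨Finset.univ.filter fun i => t ≤ x i, ?_, by simp⟩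
    refine (apply_indicator_of_meaningful hA hφ _).resolve_left fun h0 => ?_
    -- Otherwise `x` lies below a two-valued vector on which `A` takes the lower value `a < t`.
    have hev : ∀ᶠ a in nhdsWithin t (Set.Iio t), ∀ i, x i < t → x i ≤ a := by
      rw [Filter.eventually_all]
      intro i
      by_cases hi : x i < t
      · filter_upwards [Ioo_mem_nhdsLT hi] with a ha _ using ha.1.le
      · exact Filter.Eventually.of_forall fun a h => absurd h hi
    obtain ⟨a, ha, hat⟩ := (hev.and self_mem_nhdsWithin).exists
    obtain ⟨b, hb⟩ := (Set.finite_range x).bddAbove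
    have hat : a < t := hat
    have htwo := apply_twoValued hφ (Finset.univ.filter fun i => t ≤ x i)
      (hat.trans_le (le_max_right b t))
    have hle : A x ≤ _ := hA (b := fun i =>
      if i ∈ Finset.univ.filter (fun i => t ≤ x i) then max b t else a) (fun i => by
        dsimp only
        split_ifs with hi
        · exact (hb ⟨i, rfl⟩).trans (le_max_left _ _)
        · exact ha i (by simpa using hi))
    rw [htwo, h0] at hle
    linarith
  · rintro ⟨S, hS, hx⟩
    obtain ⟨b, hb⟩ := (Set.finite_range x).bddBelow
    have hat : min b (t - 1) < t := (min_le_right _ _).trans_lt (by linarith)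
    have htwo := apply_twoValued hφ S hat
    rw [hS] at htwo
    calc t = A (fun i => if i ∈ S then t else min b (t - 1)) := by rw [htwo]; ring
      _ ≤ A x := hA fun i => by
        dsimp only
        split_ifs with hi
        · exact hx i hi
        · exact (min_le_left _ _).trans (hb ⟨i, rfl⟩)

end Meaningful

/-- **Ordinal meaningfulness and lattice polynomials.**
A function `A : ℝⁿ → ℝ` is nondecreasing in each variable and meaningful for the same
input-output ordinal scales (`A(φ(x₁),…,φ(xₙ)) = φ(A(x))` for every strictly increasing
bijection `φ : ℝ → ℝ`) iff there is a binary fuzzy measure `γ : 2^N → {0,1}` (monotone,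
`γ(∅)=0`, `γ(N)=1`) with `A(x) = ⋁_{S ⊆ N, γ(S)=1} ⋀_{i∈S} xᵢ`; here the inner infimum
over the (nonempty) set `S` is written `sInf (x '' S)` and the outer supremum as an `sSup`. -/
theorem ordinal_meaningful_lattice_polynomial (n : ℕ) (hn : 1 ≤ n)
    (A : (Fin n → ℝ) → ℝ) :
    (Monotone A ∧
     (∀ φ : ℝ → ℝ, StrictMono φ → Function.Bijective φ →
        ∀ x : Fin n → ℝ, A (fun i => φ (x i)) = φ (A x))) ↔
    (∃ γ : Finset (Fin n) → Bool, γ ∅ = false ∧ γ Finset.univ = true ∧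
       (∀ S T : Finset (Fin n), S ⊆ T → γ S = true → γ T = true) ∧
       ∀ x : Fin n → ℝ,
         A x = sSup {y : ℝ | ∃ S : Finset (Fin n), γ S = true ∧
           y = sInf (x '' (S : Set (Fin n)))}) := by
  constructor
  · rintro ⟨hA, hφ⟩
    have h0 : decide (A (fun i => if i ∈ (∅ : Finset (Fin n)) then 1 else 0) = 1) = false := by
      simp [apply_zero_of_meaningful hφ]
    have h1 : decide (A (fun i => if i ∈ (Finset.univ : Finset (Fin n)) then 1 else 0) = 1)
        = true := by
      obtain ⟨hs, hb⟩ := affine_strictMono_bijective 1 1 one_pos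
      have h := hφ _ hs hb (fun _ => 0)
      simpa [apply_zero_of_meaningful hφ] using h
    refine ⟨fun S => decide (A (fun i => if i ∈ S then 1 else 0) = 1), h0, h1, ?_, fun x => ?_⟩
    · intro S T hST hS
      rw [decide_eq_true_eq] at hS ⊢
      refine (apply_indicator_of_meaningful hA hφ T).resolve_left fun hT => ?_
      have hle : A (fun i => if i ∈ S then 1 else 0) ≤ A (fun i => if i ∈ T then 1 else 0) := by
        apply hA
        intro i
        by_cases hi : i ∈ S
        · simp [hi, hST hi]
        · simp only [hi, if_false]
          split_ifs <;> norm_num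
      rw [hS, hT] at hle
      linarith
    · refine eq_of_forall_le_iff fun t => ?_
      rw [le_latticePoly_iff (γ := fun S => decide (A (fun i => if i ∈ S then 1 else 0) = 1))
        h0 h1, le_apply_iff_of_meaningful hA hφ]
      simp only [decide_eq_true_eq]
  · rintro ⟨γ, h0, h1, -, hL⟩
    have key : ∀ x t, t ≤ A x ↔ ∃ S : Finset (Fin n), γ S = true ∧ ∀ i ∈ S, t ≤ x i :=
      fun x t => by rw [hL, le_latticePoly_iff h0 h1]
    refine ⟨fun x y hxy => ?_, fun φ hm hb x => ?_⟩
    · obtain ⟨S, hS, hx⟩ := (key x (A x)).1 le_rfl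
      exact (key y (A x)).2 ⟨S, hS, fun i hi => (hx i hi).trans (hxy i)⟩
    · refine eq_of_forall_le_iff fun t => ?_
      obtain ⟨s, rfl⟩ := hb.2 t
      rw [key, hm.le_iff_le, key]
      simp only [hm.le_iff_le]
end
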